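/- arXiv:math/0609066 — 2 statements merged into one kernel-verified Lean document; each statement's English description precedes it below -/
import Mathlib

section
/- Let G be a finite cyclic group of order r with generator τ, and let I := Ψ_r(τ)·Z[G] be the ideal of Z[G] generated by Ψ_r(τ). For a permutation σ of the set G, let σ̂ denote the Z-linear automorphism of Z[G] determined by σ̂(g) = σ(g) for all g ∈ G. Then σ̂(I) ⊆ I if and only if for every g ∈ G and every subgroup H ⊆ G of prime order, σ(gH) = σ(g)H as subsets of G. -/
open Polynomial Pointwise

noncomputable section

/-- `Ψ_r(X) := (X^r − 1)/Φ_r(X) ∈ ℤ[X]`. -/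
def PsiPoly (r : ℕ) : ℤ[X] := (X ^ r - 1) /ₘ cyclotomic r ℤ

/-!
The ideal `I` consists of the elements of `ℤ[G]` killed by every non-injective character of `G`,
and it is contained in `(k - 1) ℤ[G]` for every `k ≠ 1`.

If `σ` respects the cosets of prime order subgroups and `χ` is a character with `χ k = 1` for some
`k` of prime order, then `g ↦ χ (σ g)` is invariant under multiplication by `k`. Its linear
extension `χ ∘ σ̂` therefore vanishes on `I`, whence `σ̂ I ⊆ I`.

Conversely let `H` have prime order `p`. The indicator function of `σ(x)H` is `H`-invariant, so it
vanishes on `I`, and so does its pullback along `σ̂` if `σ̂ I ⊆ I`. Since `I` contains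
`∏ (τ ^ (r / q) - 1)`, the product over the primes `q ∣ r`, twisting by an injective character
turns this into a vanishing sum of at most `p` distinct roots of unity of squarefree order, one of
them being `1`. A prime `q > p` can be removed from this order: cyclotomic fields of coprime
conductors are linearly disjoint, and one of the `q` classes modulo roots of unity of order prime to
`q` is missing from a sum of fewer than `q` terms, so the sum over each class vanishes. By induction
on `p`, distinct terms remain distinct after raising to a power whose prime divisors are smaller
than `p`. Linear disjointness at `p` then forces the terms to be exactly the `p`-th roots of unity,
which means that `σ` maps `xH` onto `σ(x)H`.
-/

section TorsionCosets

variable {G : Type*} [CommGroup G] {m n : ℕ} {x y : G} {σ : G → G}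

theorem eq_of_pow_eq_pow_of_coprime (hmn : m.Coprime n) (hm : x ^ m = y ^ m)
    (hn : x ^ n = y ^ n) : x = y := by
  rw [← div_eq_one, ← pow_one (x / y), ← hmn.gcd_eq_one]
  exact pow_gcd_eq_one.mpr
    ⟨by rw [div_pow, hm, div_self'], by rw [div_pow, hn, div_self']⟩

theorem exists_pow_eq_and_pow_eq_of_coprime (hmn : m.Coprime n) (h : x ^ (m * n) = y ^ (m * n)) :
    ∃ z, z ^ m = x ^ m ∧ z ^ n = y ^ n := by
  have hbez : (m * m.gcdA n + n * m.gcdB n : ℤ) = 1 := by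
    rw [← Nat.gcd_eq_gcd_ab, hmn.gcd_eq_one, Nat.cast_one]
  have hxy : (y / x) ^ (m * n : ℤ) = 1 := by
    have : (y / x) ^ (m * n) = 1 := by rw [div_pow, h, div_self']
    exact_mod_cast this
  refine ⟨x * (y / x) ^ (n * m.gcdB n : ℤ), ?_, ?_⟩
  · rw [mul_pow, ← zpow_natCast (_ ^ _), ← zpow_mul,
      show n * m.gcdB n * (m : ℤ) = m * n * m.gcdB n by ring, zpow_mul, hxy, one_zpow, mul_one]
  · rw [mul_pow, ← zpow_natCast (_ ^ _), ← zpow_mul,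
      show n * m.gcdB n * (n : ℤ) = n - m * n * m.gcdA n by linear_combination (n : ℤ) * hbez,
      zpow_sub, zpow_mul, hxy, one_zpow, inv_one, mul_one, zpow_natCast, div_pow, mul_div_cancel]

/-- `σ` maps every coset of the `n`-torsion subgroup of `G` into a coset of that subgroup. Since
`G` is commutative, two elements lie in the same such coset iff their `n`-th powers agree. -/
def RespectsTorsionCosets (n : ℕ) (σ : G → G) : Prop :=
  ∀ ⦃x y : G⦄, x ^ n = y ^ n → σ x ^ n = σ y ^ n

namespace RespectsTorsionCosets

theorem mul_of_coprime (hmn : m.Coprime n) (hm : RespectsTorsionCosets m σ)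
    (hn : RespectsTorsionCosets n σ) : RespectsTorsionCosets (m * n) σ := by
  intro x y hxy
  obtain ⟨z, hzx, hzy⟩ := exists_pow_eq_and_pow_eq_of_coprime hmn hxy
  calc σ x ^ (m * n) = σ z ^ (m * n) := by rw [pow_mul, pow_mul, hm hzx]
    _ = σ y ^ (m * n) := by rw [mul_comm, pow_mul, pow_mul, hn hzy]

theorem of_squarefree (hn : Squarefree n)
    (h : ∀ p, p.Prime → p ∣ n → RespectsTorsionCosets p σ) : RespectsTorsionCosets n σ := by
  induction n using induction_on_primes with
  | zero => exact absurd hn not_squarefree_zero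
  | one => simp [RespectsTorsionCosets, pow_one]
  | prime_mul p n hp ih =>
    obtain ⟨hpn, -, hn⟩ := Nat.squarefree_mul_iff.mp hn
    exact (h p hp (dvd_mul_right p n)).mul_of_coprime hpn
      (ih hn fun q hq hqn ↦ h q hq (hqn.mul_left p))

end RespectsTorsionCosets

theorem mem_subgroup_iff_pow_card_eq_one [Finite G] [IsCyclic G] (H : Subgroup G) :
    x ∈ H ↔ x ^ Nat.card H = 1 := by
  have hle : H ≤ (powMonoidHom (Nat.card H) : G →* G).ker := fun y hy ↦ by
    exact orderOf_dvd_iff_pow_eq_one.mp (H.orderOf_dvd_natCard hy)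
  have heq : H = (powMonoidHom (Nat.card H)).ker := Subgroup.eq_of_le_of_card_ge hle (by
    rw [IsCyclic.card_powMonoidHom_ker, Nat.gcd_eq_right H.card_subgroup_dvd_card])
  exact SetLike.ext_iff.mp heq x

theorem mem_smul_subgroup_iff [Finite G] [IsCyclic G] (H : Subgroup G) :
    x ∈ y • (H : Set G) ↔ x ^ Nat.card H = y ^ Nat.card H := by
  rw [Set.mem_smul_set_iff_inv_smul_mem, SetLike.mem_coe, mem_subgroup_iff_pow_card_eq_one,
    smul_eq_mul, mul_pow, inv_pow, inv_mul_eq_one, eq_comm]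

theorem forall_image_smul_eq_iff [Finite G] [IsCyclic G] (H : Subgroup G)
    (hσ : σ.Injective) : (∀ g, σ '' (g • (H : Set G)) = σ g • (H : Set G)) ↔
      RespectsTorsionCosets (Nat.card H) σ := by
  refine ⟨fun h x y hxy ↦ ?_, fun h g ↦ ?_⟩
  · rw [← mem_smul_subgroup_iff H, ← h]
    exact Set.mem_image_of_mem σ ((mem_smul_subgroup_iff H).mpr hxy)
  · refine Set.eq_of_subset_of_ncard_le ?_ ?_ (Set.toFinite _)
    · rintro _ ⟨x, hx, rfl⟩
      exact (mem_smul_subgroup_iff H).mpr (h ((mem_smul_subgroup_iff H).mp hx))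
    · rw [Set.ncard_image_of_injective _ hσ, Set.ncard_smul_set, Set.ncard_smul_set]

end TorsionCosets

section PsiPoly

variable {r : ℕ}

theorem PsiPoly_eq_prod (hr : 0 < r) : PsiPoly r = ∏ d ∈ r.properDivisors, cyclotomic d ℤ := by
  rw [PsiPoly, ← prod_cyclotomic_eq_X_pow_sub_one hr, ← Nat.insert_self_properDivisors hr.ne',
    Finset.prod_insert Nat.self_notMem_properDivisors,
    mul_divByMonic_cancel_left _ (cyclotomic.monic r ℤ)]

theorem X_pow_sub_one_dvd_PsiPoly {d : ℕ} (hd : d ∈ r.properDivisors) :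
    X ^ d - 1 ∣ PsiPoly r := by
  obtain ⟨g, hg⟩ := X_pow_sub_one_mul_cyclotomic_dvd_X_pow_sub_one_of_dvd ℤ hd
  rw [PsiPoly, hg, mul_right_comm, mul_comm _ (cyclotomic r ℤ),
    mul_divByMonic_cancel_left _ (cyclotomic.monic r ℤ)]
  exact dvd_mul_right _ _

theorem isRelPrime_cyclotomic_of_ne {d e : ℕ} (hd : 0 < d) (he : 0 < e) (hde : d ≠ e) :
    IsRelPrime (cyclotomic d ℤ) (cyclotomic e ℤ) := by
  refine (cyclotomic.irreducible hd).isRelPrime_iff_not_dvd.mpr fun hdvd ↦ hde ?_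
  exact cyclotomic_injective (eq_of_monic_of_associated (cyclotomic.monic d ℤ)
    (cyclotomic.monic e ℤ)
    ((cyclotomic.irreducible hd).associated_of_dvd (cyclotomic.irreducible he) hdvd))

variable {L : Type*} [Field L] [CharZero L] {ζ : L}

theorem PsiPoly_dvd_of_forall_aeval_eq_zero (hr : 0 < r) (hζ : IsPrimitiveRoot ζ r) {f : ℤ[X]}
    (hf : ∀ ξ : L, ξ ^ r = 1 → ¬IsPrimitiveRoot ξ r → aeval ξ f = 0) : PsiPoly r ∣ f := by
  rw [PsiPoly_eq_prod hr]
  refine Finset.prod_dvd_of_isRelPrime (fun d hd e he hde ↦ isRelPrime_cyclotomic_of_ne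
    (Nat.pos_of_mem_properDivisors hd) (Nat.pos_of_mem_properDivisors he) hde) fun d hd ↦ ?_
  obtain ⟨⟨c, rfl⟩, hdr⟩ := Nat.mem_properDivisors.mp hd
  have hd0 : 0 < d := Nat.pos_of_mem_properDivisors hd
  have hξ : IsPrimitiveRoot (ζ ^ c) d := hζ.pow hr (mul_comm d c)
  rw [cyclotomic_eq_minpoly hξ hd0]
  refine minpoly.isIntegrallyClosed_dvd (hξ.isIntegral hd0) (hf _ ?_ fun h ↦ ?_)
  · rw [pow_mul, hξ.pow_eq_one, one_pow]
  · exact hdr.ne (hξ.unique h)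

theorem PsiPoly_dvd_prod_X_pow_sub_one (hr : 0 < r) :
    PsiPoly r ∣ ∏ q ∈ r.primeFactors, (X ^ (r / q) - 1) := by
  refine PsiPoly_dvd_of_forall_aeval_eq_zero hr (Complex.isPrimitiveRoot_exp r hr.ne')
    fun ξ hξ hprim ↦ ?_
  obtain ⟨q, hq, hξq⟩ : ∃ q ∈ r.primeFactors, ξ ^ (r / q) = 1 := by
    by_contra! h
    exact hprim (IsPrimitiveRoot.iff_orderOf.mpr (orderOf_eq_of_pow_and_pow_div_prime hr hξ
      fun p hp hpr ↦ h p (Nat.mem_primeFactors.mpr ⟨hp, hpr, hr.ne'⟩)))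
  rw [map_prod]
  exact Finset.prod_eq_zero hq (by simp [hξq])

end PsiPoly

section GroupRing

open MonoidAlgebra

variable {G : Type*} [CommGroup G] {τ : G}

theorem exists_aeval_of_eq [Finite G] (hτ : ∀ g : G, g ∈ Subgroup.zpowers τ)
    (x : MonoidAlgebra ℤ G) : ∃ f : ℤ[X], aeval (of ℤ G τ) f = x := by
  induction x using MonoidAlgebra.induction_on with
  | of g =>
    obtain ⟨n, rfl⟩ := mem_powers_iff_mem_zpowers.mpr (hτ g)
    exact ⟨X ^ n, by simp⟩
  | add x y hx hy =>
    obtain ⟨f, rfl⟩ := hx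
    obtain ⟨g, rfl⟩ := hy
    exact ⟨f + g, map_add _ _ _⟩
  | smul c x hx =>
    obtain ⟨f, rfl⟩ := hx
    exact ⟨c • f, map_smul _ _ _⟩

theorem exists_monoidHom_apply_generator_eq [Finite G] {M : Type*} [CommMonoid M]
    (hτ : ∀ g : G, g ∈ Subgroup.zpowers τ) {ξ : M} (hξ : ξ ^ Nat.card G = 1) :
    ∃ χ : G →* M, χ τ = ξ := by
  let u : Mˣ := Units.ofPowEqOne ξ (Nat.card G) hξ Nat.card_pos.ne'
  have hu : orderOf u ∣ orderOf τ := by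
    rw [orderOf_eq_card_of_forall_mem_zpowers hτ]
    exact orderOf_dvd_of_pow_eq_one (Units.ext hξ)
  refine ⟨(Units.coeHom M).comp (monoidHomOfForallMemZpowers hτ hu), ?_⟩
  rw [MonoidHom.comp_apply, monoidHomOfForallMemZpowers_apply_gen]
  rfl

theorem injective_of_isPrimitiveRoot_apply_generator [Finite G] {M : Type*} [CommMonoid M]
    (hτ : ∀ g : G, g ∈ Subgroup.zpowers τ) {χ : G →* M}
    (hχ : IsPrimitiveRoot (χ τ) (Nat.card G)) : Function.Injective χ := by
  refine (injective_iff_map_eq_one χ).mpr fun g hg ↦ ?_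
  obtain ⟨n, rfl⟩ := mem_powers_iff_mem_zpowers.mpr (hτ g)
  have hn : (χ τ) ^ n = 1 := by rw [← map_pow]; exact hg
  obtain ⟨k, rfl⟩ := (hχ.pow_eq_one_iff_dvd n).mp hn
  simp only [pow_mul, pow_card_eq_one', one_pow]

theorem isPrimitiveRoot_apply_generator (hτ : ∀ g : G, g ∈ Subgroup.zpowers τ)
    {M : Type*} [CommMonoid M] {χ : G →* M} (hχ : Function.Injective χ) :
    IsPrimitiveRoot (χ τ) (Nat.card G) := by
  rw [IsPrimitiveRoot.iff_orderOf, orderOf_injective χ hχ, orderOf_eq_card_of_forall_mem_zpowers hτ]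

theorem mem_span_PsiPoly_of_forall_lift_eq_zero [Finite G] {L : Type*} [Field L] [CharZero L]
    {ζ : L} (hζ : IsPrimitiveRoot ζ (Nat.card G)) (hτ : ∀ g : G, g ∈ Subgroup.zpowers τ)
    {x : MonoidAlgebra ℤ G}
    (hx : ∀ χ : G →* L, ¬Function.Injective χ → lift ℤ L G χ x = 0) :
    x ∈ Ideal.span {aeval (of ℤ G τ) (PsiPoly (Nat.card G))} := by
  obtain ⟨f, rfl⟩ := exists_aeval_of_eq hτ x
  refine Ideal.mem_span_singleton.mpr (map_dvd (aeval (of ℤ G τ)) ?_)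
  refine PsiPoly_dvd_of_forall_aeval_eq_zero Nat.card_pos hζ fun ξ hξ hprim ↦ ?_
  obtain ⟨χ, rfl⟩ := exists_monoidHom_apply_generator_eq hτ hξ
  have := hx χ fun hχ ↦ hprim (isPrimitiveRoot_apply_generator hτ hχ)
  rwa [← aeval_algHom_apply, lift_of] at this

theorem of_sub_one_dvd_aeval_PsiPoly [Finite G] {k : G} (hk : k ≠ 1) :
    of ℤ G k - 1 ∣ aeval (of ℤ G τ) (PsiPoly (Nat.card G)) := by
  let H := Subgroup.zpowers k
  have hindex : H.index ∈ (Nat.card G).properDivisors := by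
    refine Nat.mem_properDivisors.mpr ⟨H.index_dvd_card, ?_⟩
    rw [← H.card_mul_index]
    exact lt_mul_of_one_lt_left (Nat.pos_of_ne_zero H.index_ne_zero_of_finite) (by
      rw [Subgroup.one_lt_card_iff_ne_bot]; exact fun h ↦ hk (Subgroup.zpowers_eq_bot.mp h))
  obtain ⟨n, hn⟩ := mem_powers_iff_mem_zpowers.mpr (H.pow_index_mem τ)
  calc of ℤ G k - 1 ∣ of ℤ G k ^ n - 1 := sub_one_dvd_pow_sub_one _ n
    _ = aeval (of ℤ G τ) (X ^ H.index - 1 : ℤ[X]) := by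
        rw [map_sub, map_pow, aeval_X, map_one, ← map_pow, ← map_pow]
        exact congrArg (fun g ↦ of ℤ G g - 1) hn
    _ ∣ _ := map_dvd _ (X_pow_sub_one_dvd_PsiPoly hindex)

theorem map_eq_zero_of_mem_span_PsiPoly [Finite G] {M : Type*} [AddCommGroup M] {k : G} (hk : k ≠ 1)
    {c : MonoidAlgebra ℤ G →ₗ[ℤ] M} (hc : ∀ g, c (of ℤ G (k * g)) = c (of ℤ G g))
    {x : MonoidAlgebra ℤ G} (hx : x ∈ Ideal.span {aeval (of ℤ G τ) (PsiPoly (Nat.card G))}) :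
    c x = 0 := by
  have hc' : c ∘ₗ LinearMap.mulLeft ℤ (of ℤ G k) = c :=
    (basis G ℤ).ext fun g ↦ by simpa using hc g
  obtain ⟨y, rfl⟩ := (of_sub_one_dvd_aeval_PsiPoly hk).trans (Ideal.mem_span_singleton.mp hx)
  rw [sub_one_mul, map_sub, sub_eq_zero]
  exact LinearMap.congr_fun hc' y

theorem sum_map_mul_map_prod_of_sub_one_mul {R ι : Type*} [CommRing R] (χ : G →* R)
    (c : MonoidAlgebra ℤ G →ₗ[ℤ] R) {E : Finset G} {k : ι → G} {s : Finset ι}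
    (hE : ∀ i ∈ s, ∀ e, e * k i ∈ E ↔ e ∈ E) (y : MonoidAlgebra ℤ G) :
    ∑ e ∈ E, χ e * c ((∏ i ∈ s, (of ℤ G (k i) - 1)) * (of ℤ G e * y)) =
      (∏ i ∈ s, (χ (k i)⁻¹ - 1)) * ∑ e ∈ E, χ e * c (of ℤ G e * y) := by
  classical
  induction s using Finset.induction_on generalizing y with
  | empty => simp
  | insert i s hi ih =>
    have hs : ∀ j ∈ s, ∀ e, e * k j ∈ E ↔ e ∈ E := fun j hj ↦ hE j (Finset.mem_insert_of_mem hj)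
    have hshift : ∑ e ∈ E, χ e * c (of ℤ G e * (of ℤ G (k i) * y)) =
        χ (k i)⁻¹ * ∑ e ∈ E, χ e * c (of ℤ G e * y) := by
      rw [Finset.mul_sum]
      refine Finset.sum_equiv (Equiv.mulRight (k i))
        (fun e ↦ (hE i (Finset.mem_insert_self i s) e).symm) fun e _ ↦ ?_
      have he : (k i)⁻¹ * (e * k i) = e := by rw [mul_comm e, inv_mul_cancel_left]
      simp only [Equiv.coe_mulRight]
      rw [← mul_assoc, ← map_mul, ← mul_assoc (χ _), ← map_mul, he]
    have hmul (e : G) : (∏ j ∈ insert i s, (of ℤ G (k j) - 1)) * (of ℤ G e * y) =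
        (∏ j ∈ s, (of ℤ G (k j) - 1)) * (of ℤ G e * ((of ℤ G (k i) - 1) * y)) := by
      rw [Finset.prod_insert hi]; ring
    simp only [hmul]
    rw [ih hs]
    simp only [sub_one_mul, mul_sub, map_sub, Finset.sum_sub_distrib, hshift, Finset.prod_insert hi]
    ring

end GroupRing

section VanishingSums

open IntermediateField Module

variable {K L : Type*} [Field K] [Field L]

theorem aeval_cyclotomic_eq_zero_of_isPrimitiveRoot [Algebra K L] {ε : L} {m : ℕ} (hm : 0 < m)
    (hε : IsPrimitiveRoot ε m) : aeval ε (cyclotomic m K) = 0 := by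
  rw [aeval_def, ← eval_map, map_cyclotomic]
  exact hε.isRoot_cyclotomic hm

theorem eq_of_sum_mul_pow_eq_zero [Algebra K L] {q : ℕ} (hq : q.Prime)
    (hirr : Irreducible (cyclotomic q K)) {ε : L} (hε : IsPrimitiveRoot ε q) {a : ℕ → K}
    (hsum : ∑ i ∈ Finset.range q, algebraMap K L (a i) * ε ^ i = 0) {i j : ℕ} (hi : i < q)
    (hj : j < q) : a i = a j := by
  have := Fact.mk hq
  let f : K[X] := ∑ i ∈ Finset.range q, C (a i) * X ^ i
  have hcoeff : ∀ k < q, f.coeff k = a k := fun k hk ↦ by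
    simp [f, finsetSum_coeff, coeff_X_pow, hk.not_ge]
  have hminpoly : cyclotomic q K = minpoly K ε :=
    minpoly.eq_of_irreducible_of_monic hirr
      (aeval_cyclotomic_eq_zero_of_isPrimitiveRoot hq.pos hε) (cyclotomic.monic q K)
  have hdvd : cyclotomic q K ∣ f := hminpoly ▸ minpoly.dvd K ε (by simpa [f] using hsum)
  obtain ⟨c, hc⟩ : ∃ c : K, f = C c * cyclotomic q K := by
    obtain ⟨g, hg⟩ := hdvd
    have hfdeg : f.natDegree ≤ q - 1 := natDegree_sum_le_of_forall_le _ _ fun k hk ↦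
      (natDegree_C_mul_X_pow_le _ _).trans (Nat.le_sub_one_of_lt (Finset.mem_range.mp hk))
    rcases eq_or_ne g 0 with rfl | hg0
    · exact ⟨0, by simpa using hg⟩
    · have hgdeg := (congrArg natDegree hg).symm.trans_le hfdeg
      rw [natDegree_mul (cyclotomic_ne_zero q K) hg0, natDegree_cyclotomic, Nat.totient_prime hq]
        at hgdeg
      exact ⟨g.coeff 0, by rw [hg, mul_comm, ← eq_C_of_natDegree_eq_zero (by omega)]⟩
  have hconst : ∀ k < q, f.coeff k = c := fun k hk ↦ by
    simp [hc, cyclotomic_prime, finsetSum_coeff, coeff_X_pow, hk.not_ge]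
  rw [← hcoeff i hi, ← hcoeff j hj, hconst i hi, hconst j hj]

theorem irreducible_cyclotomic_adjoin_of_coprime [CharZero L] {ζ ε : L} {m n : ℕ}
    (hζ : IsPrimitiveRoot ζ n) (hε : IsPrimitiveRoot ε m) (hn : 0 < n) (hm : 0 < m)
    (hnm : n.Coprime m) : Irreducible (cyclotomic m ℚ⟮ζ⟯) := by
  have hζint : IsIntegral ℚ ζ := (hζ.isIntegral hn).tower_top
  have hεint : IsIntegral ℚ⟮ζ⟯ ε := (hε.isIntegral hm).tower_top
  have := adjoin.finiteDimensional hζint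
  have := adjoin.finiteDimensional hεint
  let E := ℚ⟮ζ⟯⟮ε⟯
  have : Free ℚ⟮ζ⟯ E := .of_divisionRing _ _
  have : FiniteDimensional ℚ E := Module.Finite.trans ℚ⟮ζ⟯ E
  have hζ' : IsPrimitiveRoot (algebraMap ℚ⟮ζ⟯ E (AdjoinSimple.gen ℚ ζ)) n :=
    .of_map_of_injective (f := algebraMap E L) (by simpa using hζ) (algebraMap E L).injective
  have hε' : IsPrimitiveRoot (AdjoinSimple.gen ℚ⟮ζ⟯ ε) m :=
    .of_map_of_injective (f := algebraMap E L) (by simpa using hε) (algebraMap E L).injective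
  have hdeg : n.totient * m.totient ≤ n.totient * (minpoly ℚ⟮ζ⟯ ε).natDegree := by
    calc n.totient * m.totient = (n.lcm m).totient := by
          rw [hnm.lcm_eq_mul, Nat.totient_mul hnm]
      _ ≤ finrank ℚ E := hζ'.lcm_totient_le_finrank hε'
          (cyclotomic.irreducible_rat (Nat.lcm_pos hn hm))
      _ = finrank ℚ ℚ⟮ζ⟯ * finrank ℚ⟮ζ⟯ E := (finrank_mul_finrank ..).symm
      _ = n.totient * (minpoly ℚ⟮ζ⟯ ε).natDegree := by
          rw [adjoin.finrank hζint, adjoin.finrank hεint, ← cyclotomic_eq_minpoly_rat hζ hn,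
            natDegree_cyclotomic]
  have hdvd : minpoly ℚ⟮ζ⟯ ε ∣ cyclotomic m ℚ⟮ζ⟯ :=
    minpoly.dvd _ _ (aeval_cyclotomic_eq_zero_of_isPrimitiveRoot hm hε)
  have heq : cyclotomic m ℚ⟮ζ⟯ = minpoly ℚ⟮ζ⟯ ε :=
    eq_of_monic_of_dvd_of_natDegree_le (minpoly.monic hεint) (cyclotomic.monic m _) hdvd
      (by
        rw [natDegree_cyclotomic]
        exact Nat.le_of_mul_le_mul_left hdeg (Nat.totient_pos.mpr hn))
  exact heq ▸ minpoly.irreducible hεint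

theorem sum_range_sum_filter_eq_pow {ι M R : Type*} [AddCommMonoid M] [CommRing R] [IsDomain R]
    [DecidableEq R] {k : ℕ} [NeZero k] {ε : R} (hε : IsPrimitiveRoot ε k) {A : Finset ι}
    {g : ι → R} (hg : ∀ x ∈ A, g x ^ k = 1) (f : ι → M) :
    ∑ i ∈ Finset.range k, ∑ x ∈ A with g x = ε ^ i, f x = ∑ x ∈ A, f x := by
  have hinj : Set.InjOn (ε ^ ·) (Finset.range k) := fun i hi j hj ↦
    hε.pow_inj (by simpa using hi) (by simpa using hj)
  rw [← Finset.sum_image (f := fun y ↦ ∑ x ∈ A with g x = y, f x) hinj]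
  refine Finset.sum_fiberwise_of_maps_to (fun x hx ↦ ?_) f
  obtain ⟨i, hi, hxi⟩ := hε.eq_pow_of_pow_eq_one (hg x hx)
  exact Finset.mem_image.mpr ⟨i, Finset.mem_range.mpr hi, hxi⟩

variable [CharZero L] {ζ : L} {A : Finset L} {n q : ℕ}

theorem sum_filter_pow_eq_pow [DecidableEq L] (hq : q.Prime) (hnq : n.Coprime q)
    (hζ : IsPrimitiveRoot ζ (n * q)) (hA : ∀ x ∈ A, x ^ (n * q) = 1) (hsum : ∑ x ∈ A, x = 0)
    {ε : L} (hε : ε ^ q = 1) :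
    ∑ x ∈ A with x ^ n = ε ^ n, x = ε * ∑ x ∈ A with x ^ n = 1, x := by
  rcases eq_or_ne ε 1 with rfl | hε1
  · simp
  have := Fact.mk hq
  have hn : 0 < n := Nat.pos_of_ne_zero fun h ↦ hq.ne_one (by simpa [h] using hnq)
  replace hε : IsPrimitiveRoot ε q := IsPrimitiveRoot.iff_orderOf.mpr (orderOf_eq_prime hε hε1)
  have := NeZero.of_pos hn
  have hζn : IsPrimitiveRoot (ζ ^ q) n := hζ.pow (Nat.mul_pos hn hq.pos) (mul_comm n q)
  have hε0 : ε ≠ 0 := hε.ne_zero hq.ne_zero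
  have hmem (i : ℕ) :
      ∑ x ∈ A with x ^ n = (ε ^ n) ^ i, x / ε ^ i ∈ ℚ⟮ζ ^ q⟯ := by
    refine sum_mem fun x hx ↦ ?_
    obtain ⟨j, -, hj⟩ := hζn.eq_pow_of_pow_eq_one (ξ := x / ε ^ i) (by
      rw [div_pow, (Finset.mem_filter.mp hx).2, ← pow_mul, ← pow_mul, mul_comm,
        div_self (pow_ne_zero _ hε0)])
    exact hj ▸ pow_mem (mem_adjoin_simple_self ℚ _) j
  let a (i : ℕ) : ℚ⟮ζ ^ q⟯ := ⟨_, hmem i⟩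
  have ha (i : ℕ) : (a i : L) * ε ^ i = ∑ x ∈ A with x ^ n = (ε ^ n) ^ i, x :=
    (Finset.sum_mul ..).trans (Finset.sum_congr rfl fun x _ ↦ div_mul_cancel₀ x (pow_ne_zero i hε0))
  have hsum' : ∑ i ∈ Finset.range q, (a i : L) * ε ^ i = 0 := by
    rw [Finset.sum_congr rfl fun i _ ↦ ha i, ← hsum]
    exact sum_range_sum_filter_eq_pow (hε.pow_of_coprime n hnq)
      (fun x hx ↦ by rw [← pow_mul, hA x hx]) _
  have heq : a 1 = a 0 := eq_of_sum_mul_pow_eq_zero hq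
    (irreducible_cyclotomic_adjoin_of_coprime hζn hε hn hq.pos hnq) hε hsum' hq.one_lt hq.pos
  calc _ = (a 1 : L) * ε ^ 1 := by rw [ha, pow_one]
    _ = ε * ((a 0 : L) * ε ^ 0) := by rw [heq]; ring
    _ = _ := by rw [ha, pow_zero]

theorem sum_filter_pow_eq_one_eq_zero [DecidableEq L] (hq : q.Prime) (hnq : n.Coprime q)
    (hζ : IsPrimitiveRoot ζ (n * q)) (hA : ∀ x ∈ A, x ^ (n * q) = 1) (hsum : ∑ x ∈ A, x = 0)
    (hcard : A.card < q) : ∑ x ∈ A with x ^ n = 1, x = 0 := by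
  have hn : 0 < n := Nat.pos_of_ne_zero fun h ↦ hq.ne_one (by simpa [h] using hnq)
  have := NeZero.of_pos hq.pos
  have hε : IsPrimitiveRoot (ζ ^ n) q := hζ.pow (Nat.mul_pos hn hq.pos) rfl
  have hεn : IsPrimitiveRoot ((ζ ^ n) ^ n) q := hε.pow_of_coprime n hnq
  obtain ⟨i, hi⟩ : ∃ i, ∀ x ∈ A, x ^ n ≠ ((ζ ^ n) ^ i) ^ n := by
    obtain ⟨y, hy, hyA⟩ := Finset.exists_mem_notMem_of_card_lt_card
      (s := A.image (· ^ n)) (t := nthRootsFinset q (1 : L))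
      (Finset.card_image_le.trans_lt (by rwa [hε.card_nthRootsFinset]))
    obtain ⟨i, -, rfl⟩ := hεn.eq_pow_of_pow_eq_one ((mem_nthRootsFinset hq.pos 1).mp hy)
    refine ⟨i, fun x hx hxi ↦ hyA (Finset.mem_image.mpr ⟨x, hx, ?_⟩)⟩
    rw [hxi, pow_right_comm]
  have hεi : ((ζ ^ n) ^ i) ^ q = 1 := by rw [pow_right_comm, hε.pow_eq_one, one_pow]
  have := sum_filter_pow_eq_pow hq hnq hζ hA hsum hεi
  rw [Finset.filter_false_of_mem hi, Finset.sum_empty, eq_comm, mul_eq_zero] at this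
  exact this.resolve_left (pow_ne_zero _ (hε.ne_zero hq.ne_zero))

theorem mem_of_pow_eq_one_of_injOn_pow (hq : q.Prime) (hnq : n.Coprime q)
    (hζ : IsPrimitiveRoot ζ (n * q)) (hA : ∀ x ∈ A, x ^ (n * q) = 1) (h1 : 1 ∈ A)
    (hsum : ∑ x ∈ A, x = 0) (hinj : Set.InjOn (fun x : L ↦ x ^ n) A) {ε : L} (hε : ε ^ q = 1) :
    ε ∈ A := by
  classical
  have hclass {y : L} (hy : y ∈ A) : ∑ x ∈ A with x ^ n = y ^ n, x = y := by
    rw [Finset.sum_filter, Finset.sum_eq_single_of_mem y hy, if_pos rfl]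
    exact fun x hx hxy ↦ if_neg fun h ↦ hxy (hinj hx hy h)
  have hclassε : ∑ x ∈ A with x ^ n = ε ^ n, x = ε := by
    rw [sum_filter_pow_eq_pow hq hnq hζ hA hsum hε]
    simpa using congrArg (ε * ·) (hclass h1)
  obtain ⟨y, hy, -⟩ := Finset.exists_ne_zero_of_sum_ne_zero
    (hclassε.trans_ne (IsUnit.of_pow_eq_one hε hq.ne_zero).ne_zero)
  obtain ⟨hyA, hyε⟩ := Finset.mem_filter.mp hy
  have hyε' : ε = y := by rw [← hclassε, ← hyε, hclass hyA]
  exact hyε' ▸ hyA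

theorem mem_of_pow_eq_one_of_sum_eq_zero {p N : ℕ} (hp : p.Prime) (hN : Squarefree N)
    (hζ : IsPrimitiveRoot ζ N) (hA : ∀ x ∈ A, x ^ N = 1) (h1 : 1 ∈ A) (hcard : A.card ≤ p)
    (hsum : ∑ x ∈ A, x = 0)
    (hinj : ∀ m ∈ Nat.smoothNumbers p, m ∣ N → Set.InjOn (fun x : L ↦ x ^ m) A)
    {ε : L} (hε : ε ^ p = 1) : ε ∈ A := by
  classical
  induction N using Nat.strong_induction_on generalizing ζ A with
  | _ N ih =>
  by_cases! hlarge : ∃ q, q.Prime ∧ q ∣ N ∧ p < q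
  · obtain ⟨q, hq, ⟨n, rfl⟩, hpq⟩ := hlarge
    rw [mul_comm] at hN hζ hA hinj ih
    obtain ⟨hnq, hn, -⟩ := Nat.squarefree_mul_iff.mp hN
    have hn0 : 0 < n := Nat.pos_of_ne_zero hn.ne_zero
    refine Finset.mem_of_mem_filter ε (ih (A := A.filter (fun x ↦ x ^ n = 1)) n
      (lt_mul_of_one_lt_right hn0 hq.one_lt) hn (hζ.pow (Nat.mul_pos hn0 hq.pos) (mul_comm n q))
      (fun x hx ↦ (Finset.mem_filter.mp hx).2) (by simpa using h1)
      ((Finset.card_filter_le _ _).trans hcard)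
      (sum_filter_pow_eq_one_eq_zero hq hnq hζ hA hsum (hcard.trans_lt hpq)) fun m hm hmn ↦
        (hinj m hm (hmn.mul_right q)).mono (Finset.coe_subset.mpr (Finset.filter_subset _ _)))
  by_cases hpN : p ∣ N
  · obtain ⟨n, rfl⟩ := hpN
    rw [mul_comm] at hN hζ hA
    obtain ⟨hnp, -, -⟩ := Nat.squarefree_mul_iff.mp hN
    have hsmooth : n ∈ Nat.smoothNumbers p := Nat.mem_smoothNumbers'.mpr fun q hq hqn ↦
      (hlarge q hq (hqn.mul_left p)).lt_of_ne
        fun h ↦ hq.ne_one (Nat.eq_one_of_dvd_coprimes hnp hqn h.dvd)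
    exact mem_of_pow_eq_one_of_injOn_pow hp hnp hζ hA h1 hsum
      (hinj n hsmooth (Dvd.intro_left p rfl)) hε
  · have hsmooth : N ∈ Nat.smoothNumbers p := Nat.mem_smoothNumbers'.mpr fun q hq hqN ↦
      (hlarge q hq hqN).lt_of_ne fun h ↦ hpN (h ▸ hqN)
    have hA1 : A = {1} := Finset.eq_singleton_iff_unique_mem.mpr
      ⟨h1, fun x hx ↦ hinj N hsmooth dvd_rfl hx h1 ((hA x hx).trans (one_pow N).symm)⟩
    rw [hA1, Finset.sum_singleton] at hsum
    exact absurd hsum one_ne_zero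

end VanishingSums

section Main

open MonoidAlgebra UniqueFactorizationMonoid

variable {G : Type*} [CommGroup G] {L : Type*} [Field L] {τ : G} {σ : G → G}

theorem card_filter_pow_eq_le [Fintype G] [DecidableEq G] [IsCyclic G] {p : ℕ} (hp : 0 < p)
    (hσ : σ.Injective) (x : G) :
    (Finset.univ.filter fun e ↦ σ (e * x) ^ p = σ x ^ p).card ≤ p := by
  refine (Finset.card_le_card_of_injOn (fun e ↦ σ (e * x) / σ x) (fun e he ↦ ?_)
    fun e _ e' _ h ↦ ?_).trans (IsCyclic.card_pow_eq_one_le (α := G) hp)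
  · simpa [div_pow, div_eq_one] using he
  · exact mul_right_cancel (hσ (div_left_injective h))

theorem RespectsTorsionCosets.of_sum_eq_zero [CharZero L] [Fintype G] [DecidableEq G]
    [IsCyclic G] {p N : ℕ} (hp : p.Prime) (hN : Squarefree N) {ζ : L}
    (hζ : IsPrimitiveRoot ζ N) {χ : G →* L} (hχ : Function.Injective χ) (hσ : σ.Injective)
    (hsmooth : ∀ m ∈ Nat.smoothNumbers p, m ∣ N → RespectsTorsionCosets m σ)
    (hsum : ∀ x, ∑ e : G with e ^ N = 1 ∧ σ (e * x) ^ p = σ x ^ p, χ e = 0) :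
    RespectsTorsionCosets p σ := by
  classical
  intro y x hxy
  let E : Finset G := {e | e ^ N = 1 ∧ σ (e * x) ^ p = σ x ^ p}
  have hE {e : G} : e ∈ E ↔ e ^ N = 1 ∧ σ (e * x) ^ p = σ x ^ p := by simp [E]
  have hcard : (E.image χ).card ≤ p := Finset.card_image_le.trans
    ((Finset.card_le_card (Finset.monotone_filter_right _ fun _ _ h ↦ h.2)).trans
      (card_filter_pow_eq_le hp.pos hσ x))
  have hinj (m : ℕ) (hm : m ∈ Nat.smoothNumbers p) (hmN : m ∣ N) :
      Set.InjOn (fun z : L ↦ z ^ m) (E.image χ) := by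
    rw [Finset.coe_image]
    rintro _ ⟨e, he, rfl⟩ _ ⟨e', he', rfl⟩ h
    have hee' : e ^ m = e' ^ m := hχ (by simpa only [map_pow] using h)
    have hpow : σ (e * x) ^ m = σ (e' * x) ^ m :=
      hsmooth m hm hmN (by rw [mul_pow, mul_pow, hee'])
    have heq : σ (e * x) = σ (e' * x) := eq_of_pow_eq_pow_of_coprime
      (hp.smoothNumbers_coprime hm).symm hpow ((hE.mp he).2.trans (hE.mp he').2.symm)
    rw [mul_right_cancel (hσ heq)]
  have hmem : χ (y / x) ∈ E.image χ := mem_of_pow_eq_one_of_sum_eq_zero hp hN hζ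
    (Finset.forall_mem_image.mpr fun e he ↦ by rw [← map_pow, (hE.mp he).1, map_one])
    (Finset.mem_image.mpr ⟨1, hE.mpr (by simp), map_one χ⟩) hcard
    (by rw [Finset.sum_image hχ.injOn]; exact hsum x) hinj
    (by rw [← map_pow, div_pow, hxy, div_self', map_one])
  obtain ⟨e, he, hey⟩ := Finset.mem_image.mp hmem
  simpa [hχ hey] using (hE.mp he).2

theorem sum_filter_pow_radical_map_mul_eq_zero [Fintype G] [DecidableEq G]
    (hτ : ∀ g : G, g ∈ Subgroup.zpowers τ) {χ : G →* L} (hχ : Function.Injective χ)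
    {c : MonoidAlgebra ℤ G →ₗ[ℤ] L}
    (hc : ∀ y ∈ Ideal.span {aeval (of ℤ G τ) (PsiPoly (Nat.card G))}, c y = 0) (x : G) :
    ∑ e with e ^ radical (Nat.card G) = 1, χ e * c (of ℤ G (e * x)) = 0 := by
  let r := Nat.card G
  let k (q : ℕ) : G := τ ^ (r / q)
  have hr : 0 < r := Nat.card_pos
  have hk (q : ℕ) (hq : q ∈ r.primeFactors) : k q ^ radical r = 1 := by
    obtain ⟨hqp, hqr, -⟩ := Nat.mem_primeFactors.mp hq
    obtain ⟨m, hm⟩ := (dvd_radical_iff_of_irreducible hqp hr.ne').mpr hqr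
    rw [hm, ← pow_mul, ← mul_assoc, Nat.div_mul_cancel hqr, pow_mul, pow_card_eq_one', one_pow]
  have hmem (y : MonoidAlgebra ℤ G) : (∏ q ∈ r.primeFactors, (of ℤ G (k q) - 1)) * y ∈
      Ideal.span {aeval (of ℤ G τ) (PsiPoly r)} := by
    refine Ideal.mul_mem_right _ _ (Ideal.mem_span_singleton.mpr ?_)
    simpa [k] using map_dvd (aeval (of ℤ G τ)) (PsiPoly_dvd_prod_X_pow_sub_one hr)
  have hχk : ∏ q ∈ r.primeFactors, (χ (k q)⁻¹ - 1) ≠ 0 := by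
    refine Finset.prod_ne_zero_iff.mpr fun q hq h ↦ ?_
    obtain ⟨hqp, hqr, -⟩ := Nat.mem_primeFactors.mp hq
    rw [sub_eq_zero, ← map_one χ, hχ.eq_iff, inv_eq_one] at h
    have := orderOf_dvd_of_pow_eq_one h
    rw [orderOf_eq_card_of_forall_mem_zpowers hτ] at this
    exact (Nat.div_lt_self hr hqp.one_lt).not_ge
      (Nat.le_of_dvd (Nat.div_pos (Nat.le_of_dvd hr hqr) hqp.pos) this)
  have key := sum_map_mul_map_prod_of_sub_one_mul χ c (k := k) (s := r.primeFactors)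
    (E := {e : G | e ^ radical r = 1}) (fun q hq e ↦ by simp [mul_pow, hk q hq]) (of ℤ G x)
  simp only [hc _ (hmem _), mul_zero, Finset.sum_const_zero, ← map_mul (of ℤ G)] at key
  exact (mul_eq_zero.mp key.symm).resolve_left hχk

variable {σhat : MonoidAlgebra ℤ G →ₗ[ℤ] MonoidAlgebra ℤ G} [CharZero L] {ζ : L}

theorem respectsTorsionCosets_of_map_mem_span_PsiPoly [Finite G]
    (hτ : ∀ g : G, g ∈ Subgroup.zpowers τ)
    (hζ : IsPrimitiveRoot ζ (Nat.card G)) (hσ : σ.Injective)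
    (hσhat : ∀ g, σhat (of ℤ G g) = of ℤ G (σ g))
    (hmap : ∀ x ∈ Ideal.span {aeval (of ℤ G τ) (PsiPoly (Nat.card G))},
      σhat x ∈ Ideal.span {aeval (of ℤ G τ) (PsiPoly (Nat.card G))}) {p : ℕ} (hp : p.Prime)
    (hpG : p ∣ Nat.card G) : RespectsTorsionCosets p σ := by
  classical
  have := Fintype.ofFinite G
  have : IsCyclic G := ⟨τ, hτ⟩
  induction p using Nat.strong_induction_on with
  | _ p ih =>
  obtain ⟨χ, rfl⟩ := exists_monoidHom_apply_generator_eq hτ hζ.pow_eq_one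
  have hχ := injective_of_isPrimitiveRoot_apply_generator hτ hζ
  have hr : 0 < Nat.card G := Nat.card_pos
  obtain ⟨s, hs⟩ : radical (Nat.card G) ∣ Nat.card G := radical_dvd_self
  have hsmooth (m : ℕ) (hm : m ∈ Nat.smoothNumbers p) (hmr : m ∣ radical (Nat.card G)) :
      RespectsTorsionCosets m σ :=
    .of_squarefree (squarefree_radical.squarefree_of_dvd hmr) fun q hq hqm ↦
      ih q (Nat.mem_smoothNumbers'.mp hm q hq hqm) hq ((hqm.trans hmr).trans radical_dvd_self)
  refine .of_sum_eq_zero hp (squarefree_radical (a := Nat.card G))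
    (hζ.pow hr (hs.trans (mul_comm _ _))) hχ hσ hsmooth fun x ↦ ?_
  let f (g : G) : L := if g ^ p = σ x ^ p then 1 else 0
  let c : MonoidAlgebra ℤ G →ₗ[ℤ] L := (basis G ℤ).constr ℤ f
  have hc (g : G) : c (of ℤ G g) = f g := (basis G ℤ).constr_basis ℤ f g
  have := Fact.mk hp
  obtain ⟨k, hk⟩ := exists_prime_orderOf_dvd_card' p hpG
  have hcI := fun y hy ↦ map_eq_zero_of_mem_span_PsiPoly (τ := τ) (k := k) (c := c) (x := y)
    (fun h ↦ hp.ne_one (by rw [← hk, h, orderOf_one]))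
    (fun g ↦ by simp only [hc, f, mul_pow, ← hk, pow_orderOf_eq_one, one_mul]) hy
  have key := sum_filter_pow_radical_map_mul_eq_zero hτ hχ (c := c ∘ₗ σhat)
    (fun y hy ↦ hcI _ (hmap y hy)) x
  simpa only [LinearMap.comp_apply, hσhat, hc, f, mul_ite, mul_one, mul_zero, ← Finset.sum_filter,
    Finset.filter_filter] using key

theorem exists_prime_orderOf_map_eq_one_of_not_injective [Finite G] {M : Type*} [MulOneClass M]
    {χ : G →* M} (hχ : ¬Function.Injective χ) : ∃ k, (orderOf k).Prime ∧ χ k = 1 := by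
  have hker : Nat.card χ.ker ≠ 1 := fun h ↦
    hχ ((MonoidHom.ker_eq_bot_iff χ).mp (Subgroup.card_eq_one.mp h))
  obtain ⟨p, hp, hpker⟩ := Nat.exists_prime_and_dvd hker
  have := Fact.mk hp
  obtain ⟨k, hk⟩ := exists_prime_orderOf_dvd_card' p hpker
  exact ⟨k, by rwa [Subgroup.orderOf_coe, hk], k.2⟩

theorem map_mem_span_PsiPoly_of_respectsTorsionCosets [Finite G]
    (hτ : ∀ g : G, g ∈ Subgroup.zpowers τ)
    (hζ : IsPrimitiveRoot ζ (Nat.card G)) (hσhat : ∀ g, σhat (of ℤ G g) = of ℤ G (σ g))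
    (hσ : ∀ p, p.Prime → p ∣ Nat.card G → RespectsTorsionCosets p σ) {x : MonoidAlgebra ℤ G}
    (hx : x ∈ Ideal.span {aeval (of ℤ G τ) (PsiPoly (Nat.card G))}) :
    σhat x ∈ Ideal.span {aeval (of ℤ G τ) (PsiPoly (Nat.card G))} := by
  refine mem_span_PsiPoly_of_forall_lift_eq_zero hζ hτ fun χ hχ ↦ ?_
  have : IsCyclic G := ⟨τ, hτ⟩
  obtain ⟨k, hk, hχk⟩ := exists_prime_orderOf_map_eq_one_of_not_injective hχ
  have hχσ (g : G) : χ (σ (k * g)) = χ (σ g) := by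
    have hpow : σ (k * g) ^ orderOf k = σ g ^ orderOf k :=
      hσ _ hk (orderOf_dvd_natCard k) (by rw [mul_pow, pow_orderOf_eq_one, one_mul])
    rw [← Nat.card_zpowers, ← mem_smul_subgroup_iff] at hpow
    obtain ⟨_, ⟨n, rfl⟩, hn : σ g * k ^ n = σ (k * g)⟩ := hpow
    have hχn : χ (k ^ n) = 1 := (MonoidHom.mem_ker ..).mp (zpow_mem (MonoidHom.mem_ker.mpr hχk) n)
    rw [← hn, map_mul, hχn, mul_one]
  refine map_eq_zero_of_mem_span_PsiPoly (c := (lift ℤ L G χ).toLinearMap ∘ₗ σhat)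
    (k := k) (fun h ↦ ?_) (fun g ↦ ?_) hx
  · exact hk.ne_one (by rw [h, orderOf_one])
  · simp only [LinearMap.comp_apply, AlgHom.toLinearMap_apply, hσhat, lift_of, hχσ]

end Main

/-- Let `G` be finite cyclic of order `r` with generator `τ`,
`I := Ψ_r(τ)·ℤ[G]`, and for a permutation `σ` of `G` let `σ̂` be the
`ℤ`-linear automorphism of `ℤ[G]` with `σ̂(g) = σ(g)` for `g ∈ G`.  Then
`σ̂(I) ⊆ I` iff for every `g ∈ G` and every subgroup `H` of prime order,
`σ(gH) = σ(g)H` as subsets of `G`. -/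
theorem stmt_16 (G : Type*) [CommGroup G] [Fintype G] (r : ℕ)
    (hcard : Fintype.card G = r) (τ : G) (hτ : ∀ g : G, g ∈ Subgroup.zpowers τ)
    (σ : Equiv.Perm G)
    (σhat : MonoidAlgebra ℤ G ≃ₗ[ℤ] MonoidAlgebra ℤ G)
    (hσhat : ∀ g : G, σhat (MonoidAlgebra.of ℤ G g) = MonoidAlgebra.of ℤ G (σ g)) :
    let I : Ideal (MonoidAlgebra ℤ G) :=
      Ideal.span {Polynomial.aeval (MonoidAlgebra.of ℤ G τ) (PsiPoly r)}
    (∀ x ∈ I, σhat x ∈ I) ↔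
      ∀ (g : G) (H : Subgroup G), (Nat.card H).Prime →
        σ '' (g • (H : Set G)) = σ g • (H : Set G) := by
  rw [← Nat.card_eq_fintype_card] at hcard
  subst hcard
  intro I
  have : IsCyclic G := ⟨τ, hτ⟩
  have hζ := Complex.isPrimitiveRoot_exp (Nat.card G) Nat.card_pos.ne'
  refine ⟨fun hI g H hH ↦ ?_, fun hH x hx ↦ ?_⟩
  · exact (forall_image_smul_eq_iff H σ.injective).mpr
      (respectsTorsionCosets_of_map_mem_span_PsiPoly (σhat := σhat.toLinearMap) hτ hζ σ.injective
        hσhat hI hH H.card_subgroup_dvd_card) g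
  · refine map_mem_span_PsiPoly_of_respectsTorsionCosets (σhat := σhat.toLinearMap) hτ hζ hσhat
      (fun p hp hpG ↦ ?_) hx
    have := Fact.mk hp
    obtain ⟨k, rfl⟩ := exists_prime_orderOf_dvd_card' p hpG
    rw [← Nat.card_zpowers] at hp ⊢
    exact (forall_image_smul_eq_iff _ σ.injective).mp fun g ↦ hH g _ hp

end
end

section
/- Let G be a finite cyclic group of squarefree order r = p_1⋯p_t with p_1, …, p_t distinct primes, let τ be a generator of G, and let I := Ψ_r(τ)·Z[G] be the ideal of Z[G] generated by Ψ_r(τ). For each i, let H_i be the unique subgroup of G of order p_i, so that G = H_1 × ⋯ × H_t internally, and let π_i : G → H_i be the corresponding projection. For a permutation σ of the set G, let σ̂ denote the Z-linear automorphism of Z[G] determined by σ̂(g) = σ(g) for all g ∈ G. Then σ̂(I) ⊆ I if and only if there exist permutations τ_1, …, τ_t of the sets H_1, …, H_t respectively such that σ(g) = τ_1(π_1(g))·τ_2(π_2(g))⋯τ_t(π_t(g)) for every g ∈ G. -/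
open Polynomial

noncomputable section

/-!
Modulo `X ^ r - 1`, the multiples of `Ψ_r` are the polynomials divisible by every
`X ^ (r / p_i) - 1`. Hence `I` consists of the elements of `ℤ[G]` whose coefficients sum to zero on
every coset of every `H_i`; under `G = ∏ i, H_i`, these are the functions with zero sum on every
line parallel to a coordinate axis. A permutation `σ` of the product that preserves this space also
preserves its reproducing kernel `K(x, y) = ∏ i, (p_i [x_i = y_i] - 1)`. If `x` and `y` differ only
in the `i`-th coordinate, comparing the values `K(x, y) = K(σ x, σ y)` shows that `σ x` and `σ y`
differ either only in the `i`-th coordinate or only in coordinates `j` with `p_j < p_i`, and the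
second case is excluded by induction on `p_i`. So `σ` preserves the direction of every line, which
forces it to act coordinatewise.
-/

section LineSums

variable {ι : Type*} [DecidableEq ι] {X Y : ι → Type*}

/-- A function on a product whose sum over every line vanishes, a line being the set of points
obtained by varying a single coordinate. -/
def HasZeroLineSums [∀ i, Fintype (X i)] {M : Type*} [AddCommMonoid M]
    (f : (∀ i, X i) → M) : Prop :=
  ∀ i x, ∑ a, f (Function.update x i a) = 0

theorem HasZeroLineSums.comp_piCongrRight [∀ i, Fintype (X i)] [∀ i, Fintype (Y i)] {M : Type*}
    [AddCommMonoid M] {f : (∀ i, Y i) → M} (hf : HasZeroLineSums f) (τ : ∀ i, X i ≃ Y i) :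
    HasZeroLineSums (f ∘ Equiv.piCongrRight τ) := by
  intro i x
  have hupdate (a : X i) : Equiv.piCongrRight τ (Function.update x i a) =
      Function.update (Equiv.piCongrRight τ x) i (τ i a) := by
    ext j
    exact Function.apply_update (fun k => τ k) x i a j
  simp only [Function.comp_apply, hupdate]
  rw [Equiv.sum_comp (τ i) fun b => f (Function.update (Equiv.piCongrRight τ x) i b)]
  exact hf i _

variable [Fintype ι] [∀ i, Fintype (X i)]

theorem HasZeroLineSums.sum_smul_eq_zero {R M : Type*} [Semiring R] [AddCommMonoid M] [Module R M]
    {f : (∀ i, X i) → M} (hf : HasZeroLineSums f) {φ : (∀ i, X i) → R} {i : ι}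
    (hφ : DependsOn φ {i}ᶜ) : ∑ x, φ x • f x = 0 := by
  rw [← Equiv.sum_comp (Equiv.piSplitAt i X).symm, Fintype.sum_prod_type_right]
  refine Finset.sum_eq_zero fun z _ => ?_
  rcases isEmpty_or_nonempty (X i) with _ | ⟨⟨b⟩⟩
  · exact Fintype.sum_empty _
  set x := (Equiv.piSplitAt i X).symm (b, z)
  have hline (a : X i) : (Equiv.piSplitAt i X).symm (a, z) = Function.update x i a := by
    ext j
    by_cases hj : j = i
    · subst hj
      simp
    · simp [x, hj]
  have hconst (a : X i) : φ (Function.update x i a) = φ x :=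
    hφ fun j hj => Function.update_of_ne hj a x
  simp only [hline, hconst, ← Finset.smul_sum, hf i x, smul_zero]

end LineSums

section LineKernel

variable {ι : Type*} [Fintype ι] {X : ι → Type*} [∀ i, Fintype (X i)] [∀ i, DecidableEq (X i)]

/-- The reproducing kernel of the functions with zero line sums: up to the factor `∏ i, |X i|`,
the matrix of the orthogonal projection onto them. -/
def lineKernel (x y : ∀ i, X i) : ℤ :=
  ∏ i, ((if x i = y i then (Fintype.card (X i) : ℤ) else 0) - 1)

theorem lineKernel_self (x : ∀ i, X i) : lineKernel x x = ∏ i, ((Fintype.card (X i) : ℤ) - 1) := by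
  simp only [lineKernel, if_true]

theorem lineKernel_mul_prod (x y : ∀ i, X i) :
    lineKernel x y * ∏ i with x i ≠ y i, ((Fintype.card (X i) : ℤ) - 1) =
      (-1) ^ Finset.card {i | x i ≠ y i} * ∏ i, ((Fintype.card (X i) : ℤ) - 1) := by
  rw [lineKernel, Finset.prod_filter, ← Finset.prod_const, Finset.prod_filter,
    ← Finset.prod_mul_distrib, ← Finset.prod_mul_distrib]
  refine Finset.prod_congr rfl fun i _ => ?_
  by_cases h : x i = y i <;> simp [h]

variable [DecidableEq ι]

theorem hasZeroLineSums_lineKernel (x : ∀ i, X i) : HasZeroLineSums (lineKernel x) := by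
  intro i y
  have hsplit (a : X i) : lineKernel x (Function.update y i a) =
      ((if x i = a then (Fintype.card (X i) : ℤ) else 0) - 1) *
        ∏ j ∈ Finset.univ.erase i, ((if x j = y j then (Fintype.card (X j) : ℤ) else 0) - 1) := by
    rw [lineKernel, ← Finset.mul_prod_erase _ _ (Finset.mem_univ i), Function.update_self]
    congr 1
    refine Finset.prod_congr rfl fun j hj => ?_
    rw [Function.update_of_ne (Finset.ne_of_mem_erase hj)]
  simp [hsplit, ← Finset.sum_mul]

/-- Expanding the product defining the kernel, every term except `∏ i, |X i| [x i = y i]` is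
independent of some coordinate of `y`. -/
theorem HasZeroLineSums.sum_lineKernel_smul {M : Type*} [AddCommGroup M] {f : (∀ i, X i) → M}
    (hf : HasZeroLineSums f) (x : ∀ i, X i) :
    ∑ y, lineKernel x y • f y = (∏ i, (Fintype.card (X i) : ℤ)) • f x := by
  set δ : (∀ i, X i) → ι → ℤ := fun y i => if x i = y i then (Fintype.card (X i) : ℤ) else 0
  have hexpand (y : ∀ i, X i) : lineKernel x y =
      ∑ s ∈ Finset.univ.powerset, (∏ i ∈ s, δ y i) * ∏ _i ∈ Finset.univ \ s, (-1) := by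
    rw [← Finset.prod_add]
    rfl
  have hproper (s : Finset ι) (hs : s ≠ Finset.univ) :
      ∑ y, ((∏ i ∈ s, δ y i) * ∏ _i ∈ Finset.univ \ s, (-1)) • f y = 0 := by
    obtain ⟨j, hj⟩ : ∃ j, j ∉ s := by simpa [Finset.eq_univ_iff_forall] using hs
    refine hf.sum_smul_eq_zero (i := j) fun y z hyz => ?_
    congr 1
    refine Finset.prod_congr rfl fun i hi => ?_
    simp only [δ, hyz i (by rintro rfl; exact hj hi)]
  have hfull (y : ∀ i, X i) (hy : y ≠ x) : (∏ i, δ y i) = 0 := by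
    obtain ⟨i, hi⟩ := Function.ne_iff.1 hy
    exact Finset.prod_eq_zero (Finset.mem_univ i) (if_neg (Ne.symm hi))
  simp only [hexpand, Finset.sum_smul]
  rw [Finset.sum_comm, Finset.sum_eq_single Finset.univ (fun s _ hs => hproper s hs) (by simp),
    Finset.sum_eq_single x (fun y _ hy => by simp [hfull y hy]) (by simp)]
  simp [δ]

/-- A reproducing kernel is determined by the space it reproduces: the squared distance between
`lineKernel (σ x)` and the image of `lineKernel x` under `σ` vanishes. -/
theorem lineKernel_apply_perm {σ : Equiv.Perm (∀ i, X i)}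
    (hσ : ∀ f : (∀ i, X i) → ℤ, HasZeroLineSums f → HasZeroLineSums (f ∘ σ.symm))
    (x y : ∀ i, X i) : lineKernel (σ x) (σ y) = lineKernel x y := by
  have hxx := (hasZeroLineSums_lineKernel x).sum_lineKernel_smul x
  have hxσ := (hσ _ (hasZeroLineSums_lineKernel x)).sum_lineKernel_smul (σ x)
  have hσσ := (hasZeroLineSums_lineKernel (σ x)).sum_lineKernel_smul (σ x)
  rw [← Equiv.sum_comp σ] at hxσ hσσ
  simp only [Function.comp_apply, Equiv.symm_apply_apply, smul_eq_mul, lineKernel_self]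
    at hxx hxσ hσσ
  have hsq : ∑ z, (lineKernel (σ x) (σ z) - lineKernel x z) ^ 2 = 0 := by
    have hexpand (z : ∀ i, X i) : (lineKernel (σ x) (σ z) - lineKernel x z) ^ 2 =
        lineKernel (σ x) (σ z) * lineKernel (σ x) (σ z) -
          2 * (lineKernel (σ x) (σ z) * lineKernel x z) + lineKernel x z * lineKernel x z := by
      ring
    simp only [hexpand, Finset.sum_add_distrib, Finset.sum_sub_distrib, ← Finset.mul_sum, hxx, hxσ,
      hσσ]
    ring
  have hy := (Finset.sum_eq_zero_iff_of_nonneg fun z _ => sq_nonneg _).1 hsq y (Finset.mem_univ y)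
  exact sub_eq_zero.1 (sq_eq_zero_iff.1 hy)

end LineKernel

theorem eq_singleton_or_forall_lt_of_prod_eq {ι : Type*} {m : ι → ℤ}
    (hpos : ∀ i, 0 < m i) (hinj : Function.Injective m) {s : Finset ι} {i : ι}
    (h : ∏ j ∈ s, m j = -(-1) ^ s.card * m i) : s = {i} ∨ ∀ j ∈ s, m j < m i := by
  classical
  have hodd : Odd s.card := by
    by_contra hs
    rw [(Nat.not_odd_iff_even.1 hs).neg_one_pow] at h
    linarith [hpos i, Finset.prod_pos fun j (_ : j ∈ s) => hpos j]
  rw [hodd.neg_one_pow, neg_neg, one_mul] at h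
  by_cases hi : i ∈ s
  · left
    have hrest : ∏ j ∈ s.erase i, m j = 1 := by
      rw [← Finset.mul_prod_erase _ _ hi] at h
      exact mul_left_cancel₀ (hpos i).ne' (h.trans (mul_one _).symm)
    have hone (j) (hj : j ∈ s.erase i) : m j = 1 :=
      Int.eq_one_of_dvd_one (hpos j).le (hrest ▸ Finset.dvd_prod_of_mem m hj)
    have hcard : (s.erase i).card ≤ 1 :=
      Finset.card_le_one.2 fun a ha b hb => hinj ((hone a ha).trans (hone b hb).symm)
    have hs : s.card = 1 := by
      have := Finset.card_erase_add_one hi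
      obtain ⟨k, hk⟩ := hodd
      lia
    obtain ⟨j, rfl⟩ := Finset.card_eq_one.1 hs
    rw [Finset.mem_singleton.1 hi]
  · right
    intro j hj
    have hle : m j ≤ m i := Int.le_of_dvd (hpos i) (h ▸ Finset.dvd_prod_of_mem m hj)
    exact hle.lt_of_ne fun hji => hi (hinj hji ▸ hj)

section Coordinatewise

variable {ι : Type*} {X : ι → Type*}

theorem dependsOn_compl_of_forall {β : Type*} {f : (∀ i, X i) → β} {s : Finset ι}
    (hf : ∀ i ∈ s, DependsOn f {i}ᶜ) : DependsOn f (s : Set ι)ᶜ := by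
  classical
  induction s using Finset.induction_on with
  | empty => simpa using dependsOn_univ f
  | insert i s hi ih =>
    intro x y hxy
    calc f x = f (Function.update x i (y i)) :=
          hf i (Finset.mem_insert_self i s) fun j hj => (Function.update_of_ne hj _ x).symm
      _ = f y := ih (fun j hj => hf j (Finset.mem_insert_of_mem hj)) fun j hj => by
          by_cases hji : j = i
          · subst hji
            simp
          · rw [Function.update_of_ne hji]
            exact hxy j (by simp_all)

/-- The permutation `σ` sends each line in direction `i` into a line in direction `i`. -/
def MapsLines (σ : Equiv.Perm (∀ i, X i)) (i : ι) : Prop :=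
  ∀ j ≠ i, DependsOn (fun x => σ x j) {i}ᶜ

theorem exists_eq_piCongrRight_of_mapsLines [Finite ι] [∀ i, Finite (X i)] [∀ i, Nonempty (X i)]
    {σ : Equiv.Perm (∀ i, X i)} (hσ : ∀ i, MapsLines σ i) :
    ∃ τ : ∀ i, Equiv.Perm (X i), σ = Equiv.piCongrRight τ := by
  classical
  have := Fintype.ofFinite ι
  have hcoord (i : ι) : DependsOn (fun x => σ x i) {i} := by
    simpa [← Set.compl_eq_univ_sdiff] using dependsOn_compl_of_forall (s := Finset.univ.erase i)
      fun j hj => hσ j i (Finset.ne_of_mem_erase hj).symm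
  obtain ⟨z⟩ : Nonempty (∀ i, X i) := inferInstance
  set τ : ∀ i, X i → X i := fun i a => σ (Function.update z i a) i
  have hστ (x : ∀ i, X i) (i : ι) : σ x i = τ i (x i) := hcoord i (by simp)
  have hinj (i : ι) : Function.Injective (τ i) := by
    intro a b hab
    have : Function.update z i a = Function.update z i b := by
      refine σ.injective (funext fun j => ?_)
      by_cases hj : j = i
      · exact hj ▸ hab
      · simp only [hστ, Function.update_of_ne hj]
    simpa using congrFun this i
  exact ⟨fun i => Equiv.ofBijective (τ i) (Finite.injective_iff_bijective.1 (hinj i)),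
    Equiv.ext fun x => funext (hστ x)⟩

variable [∀ i, Fintype (X i)]

theorem eq_singleton_or_forall_card_lt_of_lineKernel_eq [Fintype ι] [∀ i, DecidableEq (X i)]
    (hcard : Function.Injective fun i => Fintype.card (X i)) (hone : ∀ i, 1 < Fintype.card (X i))
    {x y x' y' : ∀ i, X i} {i : ι} (hxy : ({j | x j ≠ y j} : Finset ι) = {i})
    (h : lineKernel x' y' = lineKernel x y) :
    ({j | x' j ≠ y' j} : Finset ι) = {i} ∨
      ∀ j, x' j ≠ y' j → Fintype.card (X j) < Fintype.card (X i) := by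
  set m : ι → ℤ := fun j => Fintype.card (X j) - 1
  have hpos (j : ι) : 0 < m j := by
    have := hone j
    lia
  have hinj : Function.Injective m := fun j k hjk => hcard (by simpa [m] using hjk)
  have hker := lineKernel_mul_prod x y
  have hker' := lineKernel_mul_prod x' y'
  rw [hxy, Finset.prod_singleton, Finset.card_singleton] at hker
  rw [h] at hker'
  set s : Finset ι := {j | x' j ≠ y' j}
  have hprod : ∏ j ∈ s, m j = -(-1) ^ s.card * m i := by
    refine mul_left_cancel₀ (Finset.prod_pos fun j (_ : j ∈ Finset.univ) => hpos j).ne' ?_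
    linear_combination (∏ j ∈ s, m j) * hker - m i * hker'
  refine (eq_singleton_or_forall_lt_of_prod_eq hpos hinj hprod).imp_right fun hlt j hj => ?_
  have := hlt j (by simpa [s] using hj)
  lia

/-- Induction on `|X i|`: if `σ` moved a line in direction `i` to points differing only in the
smaller coordinates, then `σ⁻¹`, which maps the lines in those directions to lines, would not
recover the `i`-th coordinate. -/
theorem mapsLines_of_lineKernel [Fintype ι] [∀ i, DecidableEq (X i)]
    (hcard : Function.Injective fun i => Fintype.card (X i))
    (hone : ∀ i, 1 < Fintype.card (X i)) {σ : Equiv.Perm (∀ i, X i)}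
    (hσ : ∀ x y, lineKernel (σ x) (σ y) = lineKernel x y) (i : ι) : MapsLines σ i := by
  induction hn : Fintype.card (X i) using Nat.strong_induction_on generalizing i σ with
  | _ n ih =>
  subst hn
  intro k hk x y hxy
  by_cases hi : x i = y i
  · have : x = y := by
      ext j
      by_cases hj : j = i
      · exact hj ▸ hi
      · exact hxy j hj
    rw [this]
  have hdiff : ({j | x j ≠ y j} : Finset ι) = {i} := by
    ext j
    simp only [Finset.mem_filter, Finset.mem_univ, true_and, Finset.mem_singleton]
    exact ⟨fun hj => by_contra fun hji => hj (hxy j hji), fun hj => hj ▸ hi⟩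
  rcases eq_singleton_or_forall_card_lt_of_lineKernel_eq hcard hone hdiff (hσ x y) with hs | hlt
  · by_contra hkσ
    exact hk (Finset.mem_singleton.1 (hs ▸ by simpa using hkσ))
  · have hsymm (x y) : lineKernel (σ.symm x) (σ.symm y) = lineKernel x y := by
      simpa using (hσ (σ.symm x) (σ.symm y)).symm
    have hdep : DependsOn (fun z => σ.symm z i) (({j | σ x j ≠ σ y j} : Finset ι) : Set ι)ᶜ := by
      refine dependsOn_compl_of_forall fun j hj => ?_
      have hji := hlt j (by simpa using hj)
      exact ih _ hji hsymm j rfl i (by rintro rfl; exact hji.false)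
    exact absurd (by simpa using @hdep (σ x) (σ y) (by simp)) hi

theorem forall_hasZeroLineSums_comp_symm_iff [Finite ι] [DecidableEq ι]
    (hcard : Function.Injective fun i => Fintype.card (X i)) (hone : ∀ i, 1 < Fintype.card (X i))
    (σ : Equiv.Perm (∀ i, X i)) :
    (∀ f : (∀ i, X i) → ℤ, HasZeroLineSums f → HasZeroLineSums (f ∘ σ.symm)) ↔
      ∃ τ : ∀ i, Equiv.Perm (X i), σ = Equiv.piCongrRight τ := by
  classical
  have := Fintype.ofFinite ι
  constructor
  · intro hσ
    have (i : ι) : Nonempty (X i) := Fintype.card_pos_iff.1 (zero_lt_one.trans (hone i))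
    exact exists_eq_piCongrRight_of_mapsLines
      (mapsLines_of_lineKernel hcard hone (lineKernel_apply_perm hσ))
  · rintro ⟨τ, rfl⟩ f hf
    exact hf.comp_piCongrRight fun i => (τ i).symm

end Coordinatewise

section Cyclotomic

theorem mem_primeFactors_prod_iff {ι : Type*} [Fintype ι] {p : ι → ℕ} (hp : ∀ i, (p i).Prime)
    {q : ℕ} : q ∈ (∏ i, p i).primeFactors ↔ ∃ i, p i = q := by
  rw [Nat.mem_primeFactors_of_ne_zero (Finset.prod_ne_zero_iff.2 fun i _ => (hp i).ne_zero)]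
  constructor
  · rintro ⟨hq, hdvd⟩
    obtain ⟨i, -, hi⟩ := (hq.prime.dvd_finsetProd_iff p).1 hdvd
    exact ⟨i, ((Nat.prime_dvd_prime_iff_eq hq (hp i)).1 hi).symm⟩
  · rintro ⟨i, rfl⟩
    exact ⟨hp i, Finset.dvd_prod_of_mem p (Finset.mem_univ i)⟩

theorem prod_cyclotomic_dvd_iff {s : Finset ℕ} {f : ℤ[X]} :
    ∏ d ∈ s, cyclotomic d ℤ ∣ f ↔ ∀ d ∈ s, cyclotomic d ℤ ∣ f := by
  refine ⟨fun h d hd => (Finset.dvd_prod_of_mem (cyclotomic · ℤ) hd).trans h, fun h => ?_⟩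
  rw [← Polynomial.map_dvd_map (Int.castRingHom ℚ) Int.cast_injective
    (monic_prod_of_monic _ _ fun d _ => cyclotomic.monic d ℤ), Polynomial.map_prod]
  refine Finset.prod_dvd_of_coprime (fun a _ b _ hab => ?_) fun d hd =>
    Polynomial.map_dvd _ (h d hd)
  simpa only [Function.onFun, map_cyclotomic] using cyclotomic.isCoprime_rat hab

theorem psiPoly_eq_prod {r : ℕ} (hr : r ≠ 0) :
    PsiPoly r = ∏ d ∈ r.properDivisors, cyclotomic d ℤ := by
  rw [PsiPoly, ← prod_cyclotomic_eq_X_pow_sub_one hr.pos, ← Nat.cons_self_properDivisors hr,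
    Finset.prod_cons, mul_divByMonic_cancel_left _ (cyclotomic.monic r ℤ)]

theorem psiPoly_dvd_X_pow_sub_one {r : ℕ} (hr : r ≠ 0) : PsiPoly r ∣ X ^ r - 1 := by
  rw [psiPoly_eq_prod hr, ← prod_cyclotomic_eq_X_pow_sub_one hr.pos,
    ← Nat.cons_self_properDivisors hr, Finset.prod_cons]
  exact dvd_mul_left _ _

theorem mem_properDivisors_iff_exists_dvd_div {d r : ℕ} (hr : r ≠ 0) :
    d ∈ r.properDivisors ↔ ∃ q ∈ r.primeFactors, d ∣ r / q := by
  rw [Nat.mem_properDivisors_iff_exists hr]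
  constructor
  · rintro ⟨k, hk, rfl⟩
    obtain ⟨q, hq, hqk⟩ := Nat.exists_prime_and_dvd hk.ne'
    exact ⟨q, Nat.mem_primeFactors.2 ⟨hq, hqk.mul_left d, hr⟩,
      Nat.mul_div_assoc d hqk ▸ dvd_mul_right d _⟩
  · rintro ⟨q, hq, k, hk⟩
    have hqr := Nat.div_mul_cancel (Nat.dvd_of_mem_primeFactors hq)
    have hr' : r = d * (k * q) := by rw [← hqr, hk, mul_assoc]
    refine ⟨k * q, ?_, hr'⟩
    have hk : k ≠ 0 := by
      rintro rfl
      simp [hr] at hr'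
    exact (Nat.prime_of_mem_primeFactors hq).one_lt.trans_le (Nat.le_mul_of_pos_left q hk.pos)

theorem psiPoly_dvd_iff {r : ℕ} (hr : r ≠ 0) {f : ℤ[X]} :
    PsiPoly r ∣ f ↔ ∀ q ∈ r.primeFactors, X ^ (r / q) - 1 ∣ f := by
  have hdiv (q) (hq : q ∈ r.primeFactors) :
      X ^ (r / q) - 1 ∣ f ↔ ∀ d, d ∣ r / q → cyclotomic d ℤ ∣ f := by
    have hq0 : r / q ≠ 0 := (Nat.div_pos (Nat.le_of_mem_primeFactors hq)
      (Nat.pos_of_mem_primeFactors hq)).ne'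
    rw [← prod_cyclotomic_eq_X_pow_sub_one hq0.pos, prod_cyclotomic_dvd_iff]
    simp only [Nat.mem_divisors, hq0, ne_eq, not_false_eq_true, and_true]
  rw [psiPoly_eq_prod hr, prod_cyclotomic_dvd_iff, forall₂_congr hdiv]
  simp only [mem_properDivisors_iff_exists_dvd_div hr]
  exact ⟨fun h q hq d hd => h d ⟨q, hq, hd⟩, fun h d ⟨q, hq, hd⟩ => h q hq d hd⟩

end Cyclotomic

section CyclicGroupRing

theorem coeff_aeval_of_pow {R G : Type*} [CommSemiring R] [Monoid G] {τ : G} {f : R[X]}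
    (hf : f.natDegree < orderOf τ) {n : ℕ} (hn : n < orderOf τ) :
    (aeval (MonoidAlgebra.of R G τ) f).coeff (τ ^ n) = f.coeff n := by
  classical
  have hterm (k : ℕ) : (f.coeff k • MonoidAlgebra.of R G τ ^ k).coeff (τ ^ n) =
      if τ ^ k = τ ^ n then f.coeff k else 0 := by
    rw [← map_pow, MonoidAlgebra.of_apply, MonoidAlgebra.smul_single, smul_eq_mul, mul_one,
      MonoidAlgebra.coeff_single, Finsupp.single_apply]
  rw [aeval_eq_sum_range' hf, MonoidAlgebra.coeff_sum, Finsupp.finsetSum_apply]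
  simp only [hterm]
  rw [Finset.sum_eq_single_of_mem n (Finset.mem_range.2 hn), if_pos rfl]
  exact fun k hk hkn => if_neg fun h => hkn (pow_injOn_Iio_orderOf (Finset.mem_range.1 hk) hn h)

theorem aeval_of_eq_zero_iff {R G : Type*} [CommRing R] [Monoid G] {τ : G} (hτ : IsOfFinOrder τ)
    {f : R[X]} : aeval (MonoidAlgebra.of R G τ) f = 0 ↔ X ^ orderOf τ - 1 ∣ f := by
  nontriviality R
  have hr : orderOf τ ≠ 0 := hτ.orderOf_pos.ne'
  have hmonic : (X ^ orderOf τ - 1 : R[X]).Monic := monic_X_pow_sub_C 1 hr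
  have hroot : aeval (MonoidAlgebra.of R G τ) (X ^ orderOf τ - 1 : R[X]) = 0 := by
    rw [map_sub, map_pow, aeval_X, map_one, ← map_pow, pow_orderOf_eq_one, map_one, sub_self]
  refine ⟨fun h => ?_, fun ⟨q, hq⟩ => by rw [hq, map_mul, hroot, zero_mul]⟩
  rw [← modByMonic_eq_zero_iff_dvd hmonic]
  set g := f %ₘ (X ^ orderOf τ - 1)
  have hg : aeval (MonoidAlgebra.of R G τ) g = 0 := by
    rw [← h, ← modByMonic_add_div f (X ^ orderOf τ - 1), map_add, map_mul, hroot, zero_mul,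
      add_zero]
  have hdeg : g.natDegree < orderOf τ := by
    have hnat : (X ^ orderOf τ - 1 : R[X]).natDegree = orderOf τ := natDegree_X_pow_sub_C (r := 1)
    rw [← hnat]
    exact natDegree_modByMonic_lt f hmonic fun h => hr (by rw [← hnat, h, natDegree_one])
  ext n
  rcases lt_or_ge n (orderOf τ) with hn | hn
  · rw [← coeff_aeval_of_pow hdeg hn, hg, MonoidAlgebra.coeff_zero, Finsupp.zero_apply, coeff_zero]
  · rw [coeff_eq_zero_of_natDegree_lt (hdeg.trans_le hn), coeff_zero]

theorem aeval_of_surjective {R G : Type*} [CommSemiring R] [Monoid G] {τ : G}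
    (hτ : ∀ g, g ∈ Submonoid.powers τ) :
    Function.Surjective (aeval (R := R) (MonoidAlgebra.of R G τ)) := by
  intro x
  induction x using MonoidAlgebra.induction_on with
  | of g =>
    obtain ⟨n, rfl⟩ := (Submonoid.mem_powers_iff _ _).1 (hτ g)
    exact ⟨X ^ n, by rw [map_pow, aeval_X, map_pow]⟩
  | add x y hx hy =>
    obtain ⟨f, rfl⟩ := hx
    obtain ⟨g, rfl⟩ := hy
    exact ⟨f + g, map_add _ _ _⟩
  | smul c x hx =>
    obtain ⟨f, rfl⟩ := hx
    exact ⟨c • f, map_smul _ _ _⟩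

/-- The sum in `R[G]` of the elements of a finite subgroup `S`. The coefficients of
`subgroupSum R S * y` are the sums of the coefficients of `y` over the cosets of `S`. -/
def subgroupSum (R : Type*) {G : Type*} [Semiring R] [Group G] (S : Subgroup G) [Fintype S] :
    MonoidAlgebra R G :=
  ∑ h : S, MonoidAlgebra.of R G h

theorem subgroupSum_mul_eq_zero_iff {R G : Type*} [Semiring R] [Group G] {S : Subgroup G}
    [Fintype S] {y : MonoidAlgebra R G} :
    subgroupSum R S * y = 0 ↔ ∀ g, ∑ h : S, y.coeff (h * g) = 0 := by
  have hcoeff (g : G) : (subgroupSum R S * y).coeff g = ∑ h : S, y.coeff (h * g) := by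
    rw [subgroupSum, Finset.sum_mul, MonoidAlgebra.coeff_sum, Finsupp.finsetSum_apply,
      ← Equiv.sum_comp (Equiv.inv S)]
    simp [MonoidAlgebra.coeff_single_mul_apply]
  simp only [MonoidAlgebra.ext_iff, DFunLike.ext_iff, hcoeff, MonoidAlgebra.coeff_zero,
    Finsupp.zero_apply]

theorem sum_range_orderOf_of_pow {R G : Type*} [Semiring R] [Group G] {x : G} (hx : IsOfFinOrder x)
    [Fintype (Subgroup.zpowers x)] :
    ∑ k ∈ Finset.range (orderOf x), MonoidAlgebra.of R G x ^ k =
      subgroupSum R (Subgroup.zpowers x) := by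
  rw [subgroupSum, ← Fin.sum_univ_eq_sum_range (fun k => MonoidAlgebra.of R G x ^ k),
    ← Equiv.sum_comp (finEquivZPowers hx)]
  simp [finEquivZPowers_apply, map_pow]

theorem zpowers_pow_index {G : Type*} [Group G] [Finite G] {τ : G}
    (hτ : ∀ g, g ∈ Subgroup.zpowers τ) (S : Subgroup G) [S.Normal] :
    Subgroup.zpowers (τ ^ S.index) = S := by
  refine Subgroup.eq_of_le_of_card_ge (Subgroup.zpowers_le.2 (S.pow_index_mem τ)) ?_
  rw [Nat.card_zpowers, orderOf_pow, orderOf_eq_card_of_forall_mem_zpowers hτ,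
    Nat.gcd_eq_right S.index_dvd_card, ← S.card_mul_index,
    Nat.mul_div_cancel _ S.index_ne_zero_of_finite.pos]

/-- Since `X ^ |G| - 1 = (1 + X ^ m + ⋯ + X ^ (m (|S| - 1))) (X ^ m - 1)` for `m = [G : S]`, and
the first factor evaluates to `subgroupSum R S` at the generator `τ`. -/
theorem subgroupSum_mul_aeval_eq_zero_iff {R G : Type*} [CommRing R] [IsDomain R] [CommGroup G]
    [Finite G] {τ : G} (hτ : ∀ g, g ∈ Subgroup.zpowers τ) (S : Subgroup G) [Fintype S] {f : R[X]} :
    subgroupSum R S * aeval (MonoidAlgebra.of R G τ) f = 0 ↔ X ^ S.index - 1 ∣ f := by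
  set geom : R[X] := ∑ k ∈ Finset.range (Nat.card S), (X ^ S.index) ^ k
  have hgeom : X ^ orderOf τ - 1 = geom * (X ^ S.index - 1) := by
    rw [geom_sum_mul, ← pow_mul, mul_comm, S.card_mul_index,
      orderOf_eq_card_of_forall_mem_zpowers hτ]
  have hgeom0 : geom ≠ 0 :=
    left_ne_zero_of_mul (hgeom ▸ X_pow_sub_C_ne_zero (orderOf_pos τ) 1)
  have haeval : aeval (MonoidAlgebra.of R G τ) geom = subgroupSum R S := by
    have hS := zpowers_pow_index hτ S
    have hord : orderOf (τ ^ S.index) = Nat.card S := by rw [← Nat.card_zpowers, hS]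
    have := Fintype.ofFinite (Subgroup.zpowers (τ ^ S.index))
    have hsum := sum_range_orderOf_of_pow (R := R) (isOfFinOrder_of_finite (τ ^ S.index))
    rw [hord] at hsum
    simp only [geom, map_sum, map_pow, aeval_X] at hsum ⊢
    rw [hsum]
    congr!
  rw [← haeval, ← map_mul, aeval_of_eq_zero_iff (isOfFinOrder_of_finite τ), hgeom,
    mul_dvd_mul_iff_left hgeom0]

variable {G : Type*} [CommGroup G] [Finite G] {τ : G}

theorem aeval_mem_span_psiPoly_iff (hτ : ∀ g, g ∈ Subgroup.zpowers τ) {f : ℤ[X]} :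
    aeval (MonoidAlgebra.of ℤ G τ) f ∈
        Ideal.span {aeval (MonoidAlgebra.of ℤ G τ) (PsiPoly (Nat.card G))} ↔
      PsiPoly (Nat.card G) ∣ f := by
  rw [Ideal.mem_span_singleton]
  refine ⟨fun ⟨z, hz⟩ => ?_, fun h => map_dvd _ h⟩
  obtain ⟨q, rfl⟩ := aeval_of_surjective (fun g => mem_powers_iff_mem_zpowers.2 (hτ g)) z
  rw [← map_mul, ← sub_eq_zero, ← map_sub, aeval_of_eq_zero_iff (isOfFinOrder_of_finite τ),
    orderOf_eq_card_of_forall_mem_zpowers hτ] at hz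
  exact (dvd_sub_left (dvd_mul_right _ q)).1 ((psiPoly_dvd_X_pow_sub_one Nat.card_pos.ne').trans hz)

theorem mem_span_psiPoly_iff (hτ : ∀ g, g ∈ Subgroup.zpowers τ) {ι : Type*} (H : ι → Subgroup G)
    [∀ i, Fintype (H i)]
    (hH : ∀ q, q ∈ (Nat.card G).primeFactors ↔ ∃ i, Nat.card (H i) = q) (y : MonoidAlgebra ℤ G) :
    y ∈ Ideal.span {aeval (MonoidAlgebra.of ℤ G τ) (PsiPoly (Nat.card G))} ↔
      ∀ i, subgroupSum ℤ (H i) * y = 0 := by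
  obtain ⟨f, rfl⟩ := aeval_of_surjective (fun g => mem_powers_iff_mem_zpowers.2 (hτ g)) y
  have hindex (i : ι) : Nat.card G / Nat.card (H i) = (H i).index :=
    Nat.div_eq_of_eq_mul_right Nat.card_pos (H i).card_mul_index.symm
  simp only [aeval_mem_span_psiPoly_iff hτ, psiPoly_dvd_iff Nat.card_pos.ne',
    subgroupSum_mul_aeval_eq_zero_iff hτ, hH, forall_exists_index, forall_apply_eq_imp_iff, hindex]

end CyclicGroupRing

section InternalProduct

theorem coeff_map_of_perm {R G : Type*} [Semiring R] [Monoid G] {σ : Equiv.Perm G}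
    {φ : MonoidAlgebra R G →ₗ[R] MonoidAlgebra R G}
    (hφ : ∀ g, φ (MonoidAlgebra.of R G g) = MonoidAlgebra.of R G (σ g)) (y : MonoidAlgebra R G) :
    ⇑(φ y).coeff = y.coeff ∘ σ.symm := by
  have hφ' : φ = MonoidAlgebra.mapDomainLinearEquiv R R σ := by
    ext g : 2
    simpa using hφ g
  ext g
  simp [hφ']

theorem exists_perm_eq_prod_iff_exists_bijOn {ι κ M S : Type*} [Fintype ι] [CommMonoid M]
    [SetLike S M] {s : ι → S} {π : ι → κ → M} (hπ : ∀ i k, π i k ∈ s i) {f : κ → M} :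
    (∃ τ : ∀ i, Equiv.Perm (s i), ∀ k, f k = ∏ i, (τ i ⟨π i k, hπ i k⟩ : M)) ↔
      ∃ τ : ι → M → M, (∀ i, Set.BijOn (τ i) (s i) (s i)) ∧ ∀ k, f k = ∏ i, τ i (π i k) := by
  classical
  constructor
  · rintro ⟨τ, hτ⟩
    refine ⟨fun i => Equiv.Perm.ofSubtype (τ i), fun i => ?_, fun k => ?_⟩
    · exact Equiv.bijOn _ fun a => Equiv.Perm.ofSubtype_apply_mem_iff_mem (τ i) a
    · simp only [hτ k, Equiv.Perm.ofSubtype_apply_of_mem _ (hπ _ k)]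
  · rintro ⟨τ, hbij, hτ⟩
    exact ⟨fun i => (hbij i).equiv, hτ⟩

variable {ι G : Type*} [Fintype ι] [CommGroup G] {H : ι → Subgroup G}

theorem exists_mulEquiv_pi_subgroup [Finite G] (hcard : Nat.card G = ∏ i, Nat.card (H i))
    {π : ι → G → G} (hπmem : ∀ i g, π i g ∈ H i) (hπ : ∀ g, g = ∏ i, π i g) :
    ∃ e : (∀ i, H i) ≃* G, (∀ x, e x = ∏ i, (x i : G)) ∧
      ∀ g, e.symm g = fun i => ⟨π i g, hπmem i g⟩ := by
  set φ : (∀ i, H i) →* G := ∏ i, (H i).subtype.comp (Pi.evalMonoidHom _ i)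
  have hφ (x : ∀ i, H i) : φ x = ∏ i, (x i : G) := by simp [φ]
  have hbij : Function.Bijective φ :=
    Function.Surjective.bijective_of_nat_card_le
      (fun g => ⟨fun i => ⟨π i g, hπmem i g⟩, (hφ _).trans (hπ g).symm⟩)
      (by rw [Nat.card_pi, hcard])
  refine ⟨MulEquiv.ofBijective φ hbij, hφ, fun g => (MulEquiv.symm_apply_eq _).2 ?_⟩
  exact (hπ g).trans (hφ fun i => ⟨π i g, hπmem i g⟩).symm

variable [∀ i, Fintype (H i)] {e : (∀ i, H i) ≃* G}

theorem forall_subgroupSum_mul_eq_zero_iff_hasZeroLineSums [DecidableEq ι]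
    {R : Type*} [Semiring R] (he : ∀ x, e x = ∏ i, (x i : G)) {y : MonoidAlgebra R G} :
    (∀ i, subgroupSum R (H i) * y = 0) ↔ HasZeroLineSums (y.coeff ∘ e) := by
  have hmul (i : ι) (h : H i) (x : ∀ i, H i) : h * e x = e (Function.update x i (h * x i)) := by
    have hsingle : e (Pi.mulSingle i h) = h := by
      rw [he, Finset.prod_eq_single i (fun j _ hj => by simp [hj]) (by simp), Pi.mulSingle_eq_same]
    rw [← hsingle, ← map_mul]
    congr 1
    ext j
    by_cases hj : j = i
    · subst hj
      simp
    · simp [hj]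
  simp only [HasZeroLineSums, subgroupSum_mul_eq_zero_iff, e.surjective.forall, hmul,
    Function.comp_apply]
  refine forall₂_congr fun i x => ?_
  rw [← Equiv.sum_comp (Equiv.mulRight (x i)) fun a => y.coeff (e (Function.update x i a))]
  rfl

theorem forall_subgroupSum_mul_map_eq_zero_iff (he : ∀ x, e x = ∏ i, (x i : G))
    (hcard : Function.Injective fun i => Fintype.card (H i)) (hone : ∀ i, 1 < Fintype.card (H i))
    {σ : Equiv.Perm G} {φ : MonoidAlgebra ℤ G →ₗ[ℤ] MonoidAlgebra ℤ G}
    (hφ : ∀ g, φ (MonoidAlgebra.of ℤ G g) = MonoidAlgebra.of ℤ G (σ g)) :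
    (∀ y, (∀ i, subgroupSum ℤ (H i) * y = 0) → ∀ i, subgroupSum ℤ (H i) * φ y = 0) ↔
      ∃ τ : ∀ i, Equiv.Perm (H i), ∀ g, σ g = ∏ i, (τ i (e.symm g i) : G) := by
  classical
  set σ' : Equiv.Perm (∀ i, H i) := e.symm.toEquiv.permCongr σ
  have hcoeff (y : MonoidAlgebra ℤ G) : (φ y).coeff ∘ e = (y.coeff ∘ e) ∘ σ'.symm := by
    ext x
    have hσ' : σ'.symm x = e.symm (σ.symm (e x)) := rfl
    simp [coeff_map_of_perm hφ, hσ']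
  have hsurj : Function.Surjective fun y : MonoidAlgebra ℤ G => y.coeff ∘ e := by
    have : Finite G := Finite.of_equiv _ e.toEquiv
    intro f
    refine ⟨.ofCoeff (Finsupp.equivFunOnFinite.symm (f ∘ e.symm)), ?_⟩
    ext x
    simp
  simp only [forall_subgroupSum_mul_eq_zero_iff_hasZeroLineSums he, hcoeff]
  rw [← hsurj.forall (p := fun f => HasZeroLineSums f → HasZeroLineSums (f ∘ σ'.symm)),
    forall_hasZeroLineSums_comp_symm_iff hcard hone]
  refine exists_congr fun τ => ?_
  rw [Equiv.ext_iff, e.symm.surjective.forall]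
  refine forall_congr' fun g => ?_
  rw [← e.injective.eq_iff, he (Equiv.piCongrRight τ _)]
  simp [σ']

end InternalProduct

/-- Let `G` be cyclic of squarefree order `r = p_1⋯p_t`
(distinct primes), with generator `τ`, and `I := Ψ_r(τ)·ℤ[G]`.  Let `H_i` be
the subgroup of order `p_i` and `π_i : G → H_i` the projections for the
internal direct product decomposition `G = H_1 × ⋯ × H_t`.  For a
permutation `σ` of `G`, with `σ̂` the induced `ℤ`-linear automorphism of
`ℤ[G]`, one has `σ̂(I) ⊆ I` iff there are permutations `τ_i` of the sets
`H_i` with `σ(g) = τ_1(π_1(g))⋯τ_t(π_t(g))` for all `g`. -/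
theorem stmt_17 (t : ℕ) (p : Fin t → ℕ) (hp : ∀ i, (p i).Prime)
    (hpinj : Function.Injective p) (r : ℕ) (hr : r = ∏ i, p i)
    (G : Type*) [CommGroup G] [Fintype G]
    (hcard : Fintype.card G = r) (τ : G) (hτ : ∀ g : G, g ∈ Subgroup.zpowers τ)
    (H : Fin t → Subgroup G) (hH : ∀ i, Nat.card (H i) = p i)
    (π : Fin t → G → G) (hπmem : ∀ (i : Fin t) (g : G), π i g ∈ H i)
    (hπ : ∀ g : G, g = ∏ i, π i g)
    (σ : Equiv.Perm G)
    (σhat : MonoidAlgebra ℤ G ≃ₗ[ℤ] MonoidAlgebra ℤ G)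
    (hσhat : ∀ g : G, σhat (MonoidAlgebra.of ℤ G g) = MonoidAlgebra.of ℤ G (σ g)) :
    let I : Ideal (MonoidAlgebra ℤ G) :=
      Ideal.span {Polynomial.aeval (MonoidAlgebra.of ℤ G τ) (PsiPoly r)}
    (∀ x ∈ I, σhat x ∈ I) ↔
      ∃ τs : Fin t → G → G,
        (∀ i, Set.BijOn (τs i) (H i) (H i)) ∧
        ∀ g : G, σ g = ∏ i, τs i (π i g) := by
  classical
  subst hr
  rw [← Nat.card_eq_fintype_card] at hcard
  have hcardH (i) : Fintype.card (H i) = p i := Nat.card_eq_fintype_card.symm.trans (hH i)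
  have hprimes (q : ℕ) : q ∈ (Nat.card G).primeFactors ↔ ∃ i, Nat.card (H i) = q := by
    simp only [hcard, mem_primeFactors_prod_iff hp, hH]
  obtain ⟨e, he, hesymm⟩ := exists_mulEquiv_pi_subgroup (by simp only [hH, hcard]) hπmem hπ
  simp only [← hcard, mem_span_psiPoly_iff hτ H hprimes]
  rw [← exists_perm_eq_prod_iff_exists_bijOn hπmem]
  have hinj : Function.Injective fun i => Fintype.card (H i) := by simpa only [hcardH]
  have hone (i) : 1 < Fintype.card (H i) := hcardH i ▸ (hp i).one_lt
  simpa only [hesymm, LinearEquiv.coe_coe] using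
    forall_subgroupSum_mul_map_eq_zero_iff he hinj hone (φ := σhat.toLinearMap) hσhat

end
end
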